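/- The number of minimal elements of the poset S_n^{(d,e,k)} = Q_{dn+e}(r,d,k) ∖ {0̂} is N(n) = (dn+e)! · r^{(d−1)n} / (n! · e! · [(d/k)!]^{kn} · k^{dn}). -/

import Mathlib

/-- An element of the Dowling lattice `Q_n(μ_r)`: an equivalence class of `μ_r`-labelled
partial partitions of `{1, ..., n}`.  It is encoded by its zero block `zero`, the
"same nonzero block" relation `rel` (an equivalence relation on the complement of `zero`),
and the relative labelling `lab i j = γ(i)⁻¹ γ(j) ∈ μ_r` for `i, j` in a common nonzero
block (normalised to `1` for unrelated pairs); this data is exactly an equivalence class of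
`G`-prepartitions `(I, π, γ)` for `G = μ_r`. -/
structure DowlingElt (n r : ℕ) where
  zero : Set (Fin n)
  rel : Fin n → Fin n → Prop
  lab : Fin n → Fin n → ℂ
  rel_compl : ∀ i j, rel i j → i ∉ zero ∧ j ∉ zero
  rel_refl : ∀ i, i ∉ zero → rel i i
  rel_symm : ∀ i j, rel i j → rel j i
  rel_trans : ∀ i j k, rel i j → rel j k → rel i k
  lab_root : ∀ i j, lab i j ^ r = 1
  lab_one : ∀ i j, ¬ rel i j → lab i j = 1
  lab_refl : ∀ i, lab i i = 1
  lab_symm : ∀ i j, rel i j → lab i j * lab j i = 1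
  lab_cocycle : ∀ i j k, rel i j → rel j k → lab i k = lab i j * lab j k

/-- The partial order of the Dowling lattice `Q_n(r)`: `x ≤ y` iff `y` is obtained from `x`
by merges, i.e. the zero block grows, and each nonzero block of `x` is either absorbed into
the zero block of `y` or contained (with compatible labels) in a nonzero block of `y`. -/
instance DowlingElt.instPreorder (n r : ℕ) : Preorder (DowlingElt n r) where
  le x y := x.zero ⊆ y.zero ∧
    ∀ i j, x.rel i j → (i ∈ y.zero ∧ j ∈ y.zero) ∨ (y.rel i j ∧ y.lab i j = x.lab i j)
  le_refl x := ⟨subset_rfl, fun i j h => Or.inr ⟨h, rfl⟩⟩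
  le_trans x y z h1 h2 := by
    refine ⟨h1.1.trans h2.1, fun i j h => ?_⟩
    rcases h1.2 i j h with hi | ⟨hr, hl⟩
    · exact Or.inl ⟨h2.1 hi.1, h2.1 hi.2⟩
    · rcases h2.2 i j hr with hi | ⟨hr', hl'⟩
      · exact Or.inl hi
      · exact Or.inr ⟨hr', hl'.trans hl⟩


/-- `d`-divisibility: every nonzero block has size divisible by `d`. -/
def DDiv {n r : ℕ} (d : ℕ) (x : DowlingElt n r) : Prop :=
  ∀ i, i ∉ x.zero → d ∣ Nat.card {j : Fin n // x.rel i j}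

/-- `k`-even colouring: identifying `μ_r` with `ℤ/r`, the colour of an element is its label
modulo `k`, detected by the `(r/k)`-th power of the label; within each nonzero block, every
colour class (measured relative to any base point `i` of the block) has the same size. -/
def EvenCol {n r : ℕ} (k : ℕ) (x : DowlingElt n r) : Prop :=
  ∀ i, i ∉ x.zero → ∀ ξ ζ : ℂ, ξ ^ k = 1 → ζ ^ k = 1 →
    Nat.card {j : Fin n // x.rel i j ∧ x.lab i j ^ (r / k) = ξ} =
      Nat.card {j : Fin n // x.rel i j ∧ x.lab i j ^ (r / k) = ζ}


/-- roots of unity -/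
abbrev RU (r : ℕ) := rootsOfUnity r ℂ

/-- colour -/
noncomputable def colH (k r : ℕ) (h : k ∣ r) : RU r →* RU k :=
  MonoidHom.codRestrict ((powMonoidHom (r / k)).comp (rootsOfUnity r ℂ).subtype) (rootsOfUnity k ℂ)
    (fun x => by
      have hx := x.2
      rw [mem_rootsOfUnity] at hx ⊢
      simp only [MonoidHom.comp_apply, powMonoidHom_apply, Subgroup.subtype_apply]
      rw [← pow_mul, Nat.div_mul_cancel h, hx])

lemma colH_coe (k r : ℕ) (h : k ∣ r) (a : RU r) :
    (((colH k r h a : RU k) : ℂˣ) : ℂ) = (((a : RU r) : ℂˣ) : ℂ) ^ (r / k) := by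
  simp [colH]

lemma RU_ext {r : ℕ} {a b : RU r} (h : ((a : ℂˣ) : ℂ) = ((b : ℂˣ) : ℂ)) : a = b :=
  Subtype.ext (Units.ext h)

lemma RU_exists {r : ℕ} (hr : 0 < r) (z : ℂ) (hz : z ^ r = 1) :
    ∃ a : RU r, ((a : ℂˣ) : ℂ) = z := by
  have : NeZero r := ⟨hr.ne'⟩
  exact ⟨rootsOfUnity.mkOfPowEq z hz, by simp⟩

lemma RU_pow {r : ℕ} (a : RU r) : ((a : ℂˣ) : ℂ) ^ r = 1 := by
  have := a.2
  rw [mem_rootsOfUnity] at this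
  have h2 := congrArg Units.val this
  rw [Units.val_pow_eq_pow_val] at h2
  exact h2

lemma colH_surj (k r : ℕ) (hk : 0 < k) (hr : 0 < r) (h : k ∣ r) (z : RU k) :
    ∃ a, colH k r h a = z := by
  obtain ⟨w, hw⟩ := IsAlgClosed.exists_pow_nat_eq ((z : ℂˣ) : ℂ)
    (Nat.div_pos (Nat.le_of_dvd hr h) hk)
  obtain ⟨a, ha⟩ := RU_exists hr w (by
    rw [← Nat.div_mul_cancel h, pow_mul, hw, RU_pow])
  exact ⟨a, RU_ext (by rw [colH_coe, ha, hw])⟩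

lemma card_RU {r : ℕ} (hr : 0 < r) : Nat.card (RU r) = r := by
  have : NeZero r := ⟨hr.ne'⟩
  exact Complex.card_rootsOfUnity r

lemma finite_RU {r : ℕ} (hr : 0 < r) : Finite (RU r) := by
  have : NeZero r := ⟨hr.ne'⟩
  infer_instance

/-- sum over fibres -/
lemma sum_card_fiber {α P : Type*} [Finite α] [Fintype P] (g : α → P) :
    ∑ p, Nat.card {a // g a = p} = Nat.card α := by
  rw [← Nat.card_sigma]
  exact Nat.card_congr (Equiv.sigmaFiberEquiv g)

lemma card_colH_fiber (k r : ℕ) (hk : 0 < k) (hr : 0 < r) (h : k ∣ r) (z : RU k) :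
    Nat.card {a // colH k r h a = z} = r / k := by
  have := finite_RU hr
  have := finite_RU hk
  have := Fintype.ofFinite (RU k)
  have key : ∀ z', Nat.card {a // colH k r h a = z'} = Nat.card {a // colH k r h a = z} := by
    intro z'
    obtain ⟨u, hu⟩ := colH_surj k r hk hr h (z * z'⁻¹)
    refine Nat.card_congr ((Equiv.mulLeft u).subtypeEquiv fun a => ?_)
    simp only [Equiv.coe_mulLeft, map_mul, hu]
    constructor
    · rintro rfl; simp
    · intro hh
      rw [mul_assoc, mul_eq_left, inv_mul_eq_one] at hh
      exact hh.symm
  have := sum_card_fiber (colH k r h)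
  simp only [key, Finset.sum_const, Finset.card_univ, smul_eq_mul] at this
  rw [card_RU hr, ← Nat.card_eq_fintype_card, card_RU hk] at this
  exact (Nat.div_eq_of_eq_mul_right hk this.symm).symm

/-- multinomial count -/
lemma card_fun_fiber {α P : Type*} [Finite α] [Fintype P] (w : P → ℕ)
    (hw : ∑ p, w p = Nat.card α) :
    Nat.card {g : α → P // ∀ p, Nat.card {a // g a = p} = w p} * ∏ p, (w p).factorial
      = (Nat.card α).factorial := by
  classical
  have := Fintype.ofFinite α
  have e0 : Nonempty (α ≃ Σ p, Fin (w p)) := by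
    refine ⟨Fintype.equivOfCardEq ?_⟩
    rw [← Nat.card_eq_fintype_card, ← hw]
    simp
  obtain ⟨e0⟩ := e0
  let g0 : α → P := fun a => (e0 a).1
  have hg0 : ∀ p, Nat.card {a // g0 a = p} = w p := by
    intro p
    rw [← Nat.card_fin (w p)]
    exact Nat.card_congr ((e0.subtypeEquiv (fun a => Iff.rfl)).trans (Equiv.sigmaSubtype p))
  let G := {g : α → P // ∀ p, Nat.card {a // g a = p} = w p}
  let Φ : Equiv.Perm α → G := fun τ => ⟨fun a => g0 (τ a), fun p => by
    rw [← hg0 p]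
    exact Nat.card_congr (τ.subtypeEquiv (fun a => Iff.rfl))⟩
  have hfin : Finite G := by infer_instance
  have : Fintype G := Fintype.ofFinite G
  have hs := sum_card_fiber Φ
  have hst : Nat.card {τ : Equiv.Perm α // g0 ∘ τ = g0} = ∏ p, (w p).factorial := by
    rw [Nat.card_eq_fintype_card, DomMulAct.stabilizer_card g0]
    refine Finset.prod_congr rfl fun p _ => ?_
    rw [← hg0 p, Nat.card_eq_fintype_card]
  have hfib : ∀ g : G, Nat.card {τ // Φ τ = g} = ∏ p, (w p).factorial := by
    intro g
    rw [← hst]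
    have : ∀ p, Nonempty ({a // g.1 a = p} ≃ {a // g0 a = p}) := fun p =>
      ⟨Fintype.equivOfCardEq (by
        rw [← Nat.card_eq_fintype_card, ← Nat.card_eq_fintype_card, g.2 p, hg0 p])⟩
    let E := fun p => (this p).some
    let τ0 : Equiv.Perm α := Equiv.ofFiberEquiv E
    have hτ0 : ∀ a, g0 (τ0 a) = g.1 a := fun a => Equiv.ofFiberEquiv_map E a
    refine Nat.card_congr ((Equiv.mulRight τ0⁻¹).subtypeEquiv fun τ => ?_)
    constructor
    · intro h
      funext a
      have h1 := congrFun (congrArg Subtype.val h) (τ0⁻¹ a)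
      change g0 (τ (τ0⁻¹ a)) = _ at h1
      rw [← hτ0] at h1
      simpa using h1
    · intro h
      apply Subtype.ext
      funext a
      have h1 := congrFun h (τ0 a)
      rw [← hτ0]
      simpa using h1
  rw [Finset.sum_congr rfl (fun g _ => hfib g), Finset.sum_const, smul_eq_mul, Finset.card_univ,
    ← Nat.card_eq_fintype_card, Nat.card_perm] at hs
  exact hs

open Classical in
/-- label -/
noncomputable def labOf {L : Type*} {r : ℕ} : Option (L × RU r) → Option (L × RU r) → ℂ
  | some (l, a), some (l', b) => if l = l' then (((a⁻¹ * b : RU r) : ℂˣ) : ℂ) else 1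
  | _, _ => 1

lemma labOf_some {L : Type*} {r : ℕ} (l : L) (a b : RU r) :
    labOf (some (l, a)) (some (l, b)) = (((a⁻¹ * b : RU r) : ℂˣ) : ℂ) := by
  simp [labOf]

/-- construct an element -/
noncomputable def ofFun {N r : ℕ} {L : Type*} (f : Fin N → Option (L × RU r)) :
    DowlingElt N r where
  zero := {i | f i = none}
  rel i j := ∃ l a b, f i = some (l, a) ∧ f j = some (l, b)
  lab i j := labOf (f i) (f j)
  rel_compl := by
    rintro i j ⟨l, a, b, hi, hj⟩
    simp [hi, hj]
  rel_refl := by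
    intro i hi
    rcases h : f i with _ | ⟨l, a⟩
    · exact absurd h hi
    · exact ⟨l, a, a, rfl, rfl⟩
  rel_symm := by
    rintro i j ⟨l, a, b, hi, hj⟩
    exact ⟨l, b, a, hj, hi⟩
  rel_trans := by
    rintro i j k ⟨l, a, b, hi, hj⟩ ⟨l', a', b', hi', hj'⟩
    rw [hj] at hi'
    simp only [Option.some.injEq, Prod.mk.injEq] at hi'
    obtain ⟨rfl, rfl⟩ := hi'
    exact ⟨l, a, b', hi, hj'⟩
  lab_root := by
    intro i j
    rcases f i with _ | ⟨l, a⟩ <;> rcases f j with _ | ⟨l', b⟩ <;> simp only [labOf, one_pow]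
    split_ifs
    · exact RU_pow _
    · simp
  lab_one := by
    intro i j h
    rcases hi : f i with _ | ⟨l, a⟩ <;> rcases hj : f j with _ | ⟨l', b⟩ <;> simp only [labOf]
    rw [if_neg]
    rintro rfl
    exact h ⟨l, a, b, hi, hj⟩
  lab_refl := by
    intro i
    rcases f i with _ | ⟨l, a⟩ <;> simp [labOf]
  lab_symm := by
    rintro i j ⟨l, a, b, hi, hj⟩
    rw [hi, hj, labOf_some, labOf_some, ← Units.val_mul, ← Subgroup.coe_mul]
    simp
  lab_cocycle := by
    rintro i j k ⟨l, a, b, hi, hj⟩ ⟨l', a', b', hi', hj'⟩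
    rw [hj] at hi'
    simp only [Option.some.injEq, Prod.mk.injEq] at hi'
    obtain ⟨rfl, rfl⟩ := hi'
    rw [hi, hj, hj', labOf_some, labOf_some, labOf_some, ← Units.val_mul, ← Subgroup.coe_mul]
    simp [mul_assoc]

lemma DowlingElt_ext' {N r : ℕ} {x y : DowlingElt N r} (h1 : x.zero = y.zero)
    (h2 : ∀ i j, x.rel i j ↔ y.rel i j) (h3 : ∀ i j, x.rel i j → x.lab i j = y.lab i j) :
    x = y := by
  have h2' : x.rel = y.rel := by
    funext i j; exact propext (h2 i j)
  have h3' : x.lab = y.lab := by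
    funext i j
    by_cases h : x.rel i j
    · exact h3 i j h
    · rw [x.lab_one i j h, y.lab_one i j (fun h' => h ((h2 i j).2 h'))]
  cases x; cases y; simp_all

/-- representation -/
lemma exists_ofFun {N r : ℕ} (hr : 0 < r) (x : DowlingElt N r) :
    ∃ (L : Type) (_ : Fintype L) (f : Fin N → Option (L × RU r)),
      (∀ l, ∃ i a, f i = some (l, a)) ∧ ofFun f = x := by
  classical
  let s : Setoid {i // i ∉ x.zero} :=
    ⟨fun i j => x.rel i j, ⟨fun i => x.rel_refl _ i.2, fun h => x.rel_symm _ _ h,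
      fun h h' => x.rel_trans _ _ _ h h'⟩⟩
  have hroot : ∀ i j, ∃ a : RU r, ((a : ℂˣ) : ℂ) = x.lab i j :=
    fun i j => RU_exists hr _ (x.lab_root i j)
  choose A hA using hroot
  let f : Fin N → Option (Quotient s × RU r) := fun i =>
    if h : i ∈ x.zero then none else
      some (Quotient.mk s ⟨i, h⟩, A (Quotient.mk s ⟨i, h⟩).out.1 i)
  have hf : ∀ i (h : i ∉ x.zero),
    f i = some (Quotient.mk s ⟨i, h⟩, A (Quotient.mk s ⟨i, h⟩).out.1 i) := by
    intro i h; simp [f, h]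
  have hf0 : ∀ i, f i = none ↔ i ∈ x.zero := by
    intro i; by_cases h : i ∈ x.zero <;> simp [f, h]
  have hrel : ∀ i j, (ofFun f).rel i j ↔ x.rel i j := by
    intro i j
    constructor
    · rintro ⟨l, a, b, hi, hj⟩
      have h1 : i ∉ x.zero := by rw [← hf0, hi]; simp
      have h2 : j ∉ x.zero := by rw [← hf0, hj]; simp
      rw [hf i h1] at hi
      rw [hf j h2] at hj
      simp only [Option.some.injEq, Prod.mk.injEq] at hi hj
      exact Quotient.exact (hi.1.trans hj.1.symm)
    · intro h
      obtain ⟨h1, h2⟩ := x.rel_compl i j h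
      refine ⟨_, _, A (Quotient.mk s ⟨j, h2⟩).out.1 j, hf i h1, ?_⟩
      · rw [hf j h2]
        have : (Quotient.mk s ⟨j, h2⟩) = Quotient.mk s ⟨i, h1⟩ :=
          Quotient.sound (x.rel_symm _ _ h)
        rw [this]
  refine ⟨Quotient s, Fintype.ofFinite _, f, ?_, ?_⟩
  · intro l
    induction l using Quotient.inductionOn with
    | h i => exact ⟨i.1, _, hf i.1 i.2⟩
  · refine DowlingElt_ext' (by ext i; exact hf0 i) hrel ?_
    intro i j hij
    have hx := (hrel i j).1 hij
    obtain ⟨h1, h2⟩ := x.rel_compl i j hx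
    have : (Quotient.mk s ⟨j, h2⟩) = Quotient.mk s ⟨i, h1⟩ :=
          Quotient.sound (x.rel_symm _ _ hx)
    change labOf (f i) (f j) = _
    rw [hf i h1, hf j h2, this, labOf_some]
    have hq : x.rel (Quotient.mk s ⟨i, h1⟩).out.1 i := Quotient.mk_out (s := s) ⟨i, h1⟩
    set q := (Quotient.mk s ⟨i, h1⟩).out.1
    have hc := x.lab_cocycle q i j hq hx
    have hne : x.lab q i ≠ 0 := by
      intro h0; have := x.lab_symm _ _ hq; rw [h0] at this; simp at this
    push_cast
    rw [hA, hA, hc]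
    field_simp

/-- coloured version of a function -/
noncomputable def col {N k r : ℕ} {L : Type*} (h : k ∣ r) (f : Fin N → Option (L × RU r))
    (i : Fin N) : Option (L × RU k) := (f i).map (Prod.map id (colH k r h))

lemma col_none {N k r : ℕ} {L : Type*} (h : k ∣ r) (f : Fin N → Option (L × RU r))
    (i : Fin N) : col h f i = none ↔ f i = none := by
  simp [col]

lemma col_some {N k r : ℕ} {L : Type*} (h : k ∣ r) (f : Fin N → Option (L × RU r))
    (i : Fin N) (l : L) (z : RU k) :
    col h f i = some (l, z) ↔ ∃ a, f i = some (l, a) ∧ colH k r h a = z := by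
  simp only [col, Option.map_eq_some_iff, Prod.exists, Prod.map_apply, id, Prod.mk.injEq]
  constructor
  · rintro ⟨l', a, h1, rfl, h2⟩; exact ⟨a, h1, h2⟩
  · rintro ⟨a, h1, h2⟩; exact ⟨l, a, h1, rfl, h2⟩

/-- evenness and divisibility -/
def Ev {N k r : ℕ} {L : Type*} (d : ℕ) (h : k ∣ r) (f : Fin N → Option (L × RU r)) : Prop :=
  ∀ l, ∃ m, ∀ z, Nat.card {i // col h f i = some (l, z)} = m * (d / k)

lemma block_card {N k r : ℕ} {L : Type*} (h : k ∣ r) [Fintype (RU k)]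
    (f : Fin N → Option (L × RU r)) {i : Fin N} {l : L} {a : RU r} (hi : f i = some (l, a)) :
    Nat.card {j // (ofFun f).rel i j} = ∑ z, Nat.card {j // col h f j = some (l, z)} := by
  rw [← Nat.card_sigma]
  symm
  refine Nat.card_congr (Equiv.ofBijective
    (fun p : (Σ z, {j // col h f j = some (l, z)}) => ⟨p.2.1, ?_⟩) ⟨?_, ?_⟩)
  · obtain ⟨b, hb, -⟩ := (col_some h f _ _ _).1 p.2.2
    exact ⟨l, a, b, hi, hb⟩
  · rintro ⟨z, j, hj⟩ ⟨z', j', hj'⟩ hh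
    simp only [Subtype.mk.injEq] at hh
    subst hh
    rw [hj] at hj'
    simp only [Option.some.injEq, Prod.mk.injEq, true_and] at hj'
    subst hj'
    rfl
  · rintro ⟨j, l', a', b, h1, h2⟩
    rw [hi] at h1
    simp only [Option.some.injEq, Prod.mk.injEq] at h1
    obtain ⟨rfl, rfl⟩ := h1
    exact ⟨⟨colH k r h b, j, (col_some h f _ _ _).2 ⟨b, h2, rfl⟩⟩, rfl⟩

lemma color_card {N k r : ℕ} {L : Type*} (h : k ∣ r)
    (f : Fin N → Option (L × RU r)) {i : Fin N} {l : L} {a : RU r} (hi : f i = some (l, a))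
    (z : RU k) :
    Nat.card {j // (ofFun f).rel i j ∧ (ofFun f).lab i j ^ (r / k) = ((z : ℂˣ) : ℂ)} =
      Nat.card {j // col h f j = some (l, colH k r h a * z)} := by
  refine Nat.card_congr (Equiv.subtypeEquivRight fun j => ?_)
  rw [col_some]
  constructor
  · rintro ⟨⟨l', a', b, h1, h2⟩, h3⟩
    rw [hi] at h1
    simp only [Option.some.injEq, Prod.mk.injEq] at h1
    obtain ⟨rfl, rfl⟩ := h1
    refine ⟨b, h2, ?_⟩
    change labOf (f i) (f j) ^ _ = _ at h3
    rw [hi, h2, labOf_some, ← colH_coe k r h] at h3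
    rw [← RU_ext h3]
    simp
  · rintro ⟨b, h2, h3⟩
    refine ⟨⟨l, a, b, hi, h2⟩, ?_⟩
    change labOf (f i) (f j) ^ _ = _
    rw [hi, h2, labOf_some, ← colH_coe k r h, map_mul, h3]
    simp

lemma ev_block {N k r d : ℕ} {L : Type*} (h : k ∣ r) (hk : 0 < k) (hkd : k ∣ d)
    [Fintype (RU k)] (f : Fin N → Option (L × RU r)) (l : L) (m : ℕ)
    (hm : ∀ z, Nat.card {i // col h f i = some (l, z)} = m * (d / k)) :
    ∑ z, Nat.card {j // col h f j = some (l, z)} = d * m := by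
  rw [Finset.sum_congr rfl (fun z _ => hm z), Finset.sum_const, Finset.card_univ,
    ← Nat.card_eq_fintype_card, card_RU hk, smul_eq_mul]
  conv_rhs => rw [← Nat.mul_div_cancel' hkd]
  ring

lemma ev_iff {N k r d : ℕ} {L : Type*} (h : k ∣ r) (hk : 0 < k) (hkd : k ∣ d)
    (f : Fin N → Option (L × RU r)) :
    (DDiv d (ofFun f) ∧ EvenCol k (ofFun f)) ↔ Ev d h f := by
  have := finite_RU hk
  have := Fintype.ofFinite (RU k)
  constructor
  · rintro ⟨h1, h2⟩ l
    by_cases hl : ∃ i a, f i = some (l, a)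
    · obtain ⟨i, a, hi⟩ := hl
      have hi0 : i ∉ (ofFun f).zero := by
        change ¬ (f i = none); simp [hi]
      obtain ⟨m, hm⟩ := h1 i hi0
      have hall : ∀ z, Nat.card {j // col h f j = some (l, z)} =
          Nat.card {j // col h f j = some (l, 1)} := by
        intro z
        have e1 := color_card h f hi ((colH k r h a)⁻¹ * z)
        have e2 := color_card h f hi ((colH k r h a)⁻¹ * 1)
        rw [mul_inv_cancel_left] at e1 e2
        rw [← e1, ← e2]
        exact h2 i hi0 _ _ (RU_pow _) (RU_pow _)
      refine ⟨m, fun z => ?_⟩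
      rw [block_card h f hi, Finset.sum_congr rfl (fun z _ => hall z), Finset.sum_const,
        Finset.card_univ, ← Nat.card_eq_fintype_card, card_RU hk, smul_eq_mul] at hm
      rw [hall z]
      apply Nat.eq_of_mul_eq_mul_left hk
      rw [hm]
      conv_lhs => rw [← Nat.mul_div_cancel' hkd]
      ring
    · refine ⟨0, fun z => ?_⟩
      rw [zero_mul]
      have : IsEmpty {i // col h f i = some (l, z)} := by
        refine ⟨fun i => hl ?_⟩
        obtain ⟨a, ha, -⟩ := (col_some h f _ _ _).1 i.2
        exact ⟨_, _, ha⟩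
      exact Nat.card_of_isEmpty
  · intro hE
    constructor
    · intro i hi
      rcases hfi : f i with _ | ⟨l, a⟩
      · exact absurd hfi hi
      obtain ⟨m, hm⟩ := hE l
      rw [block_card h f hfi, ev_block h hk hkd f l m hm]
      exact dvd_mul_right _ _
    · intro i hi ξ ζ h1 h2
      rcases hfi : f i with _ | ⟨l, a⟩
      · exact absurd hfi hi
      obtain ⟨m, hm⟩ := hE l
      obtain ⟨ξ, rfl⟩ := RU_exists hk ξ h1
      obtain ⟨ζ, rfl⟩ := RU_exists hk ζ h2
      rw [color_card h f hfi, color_card h f hfi, hm, hm]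

lemma total_card {N k r : ℕ} {L : Type*} [Fintype L] (h : k ∣ r) [Fintype (RU k)]
    (f : Fin N → Option (L × RU r)) :
    Nat.card {i // f i = none} + ∑ l, ∑ z, Nat.card {i // col h f i = some (l, z)} = N := by
  have := sum_card_fiber (col h f)
  rw [Fintype.sum_option, Fintype.sum_prod_type, Nat.card_fin] at this
  simpa only [col_none] using this

lemma card_split {α : Type*} [Finite α] (P Q : α → Prop) :
    Nat.card {a // P a ∧ Q a} + Nat.card {a // P a ∧ ¬ Q a} = Nat.card {a // P a} := by
  classical
  have := Fintype.ofFinite α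
  simp only [Nat.card_eq_fintype_card, Fintype.card_subtype]
  simp only [← Finset.filter_filter]
  exact Finset.card_filter_add_card_filter_not _

lemma refine_split {N k r q d : ℕ} {L : Type*} (h : k ∣ r) (hq : q = d / k)
    (f : Fin N → Option (L × RU r)) (hE : Ev d h f)
    (φ : RU k × Fin q → Fin N) (hφ : Function.Injective φ) (γ : RU k × Fin q → RU r)
    (hγ : ∀ p, colH k r h (γ p) = p.1)
    (hc : (∀ p, f (φ p) = none) ∨ ∃ l0, ∀ p, f (φ p) = some (l0, γ p)) :
    ∃ f' : Fin N → Option (Option L × RU r), Ev d h f' ∧ ofFun f' ≤ ofFun f ∧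
      (∀ p, ∃ a, f' (φ p) = some (none, a)) ∧
      (∀ i, (∀ p, φ p ≠ i) → ∀ a, f' i ≠ some (none, a)) := by
  classical
  let f' : Fin N → Option (Option L × RU r) := fun i =>
    if hi : ∃ p, φ p = i then some (none, γ hi.choose) else (f i).map (Prod.map some id)
  have h1 : ∀ p, f' (φ p) = some (none, γ p) := by
    intro p
    have hi : ∃ p', φ p' = φ p := ⟨p, rfl⟩
    simp only [f', dif_pos hi]
    rw [hφ hi.choose_spec]
  have h2 : ∀ i, (¬ ∃ p, φ p = i) → f' i = (f i).map (Prod.map some id) := by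
    intro i hi
    simp only [f', dif_neg hi]
  have h3 : ∀ i l a, f' i = some (some l, a) ↔ (f i = some (l, a) ∧ ¬ ∃ p, φ p = i) := by
    intro i l a
    by_cases hi : ∃ p, φ p = i
    · obtain ⟨p, rfl⟩ := hi
      simp [h1]
    · rw [h2 i hi]
      rcases f i with _ | ⟨l', a'⟩ <;> simp [hi]
  have h4 : ∀ i a, f' i = some (none, a) ↔ ∃ p, φ p = i ∧ γ p = a := by
    intro i a
    by_cases hi : ∃ p, φ p = i
    · obtain ⟨p, rfl⟩ := hi
      rw [h1]
      simp [hφ.eq_iff]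
    · rw [h2 i hi]
      constructor
      · intro hh; rcases hfi : f i with _ | ⟨l', a'⟩ <;> simp [hfi] at hh
      · rintro ⟨p, hp, -⟩; exact absurd ⟨p, hp⟩ hi
  have hcn : ∀ z, Nat.card {i // col h f' i = some (none, z)} = q := by
    intro z
    rw [← Nat.card_fin q]
    symm
    refine Nat.card_congr (Equiv.ofBijective
      (fun t : Fin q => ⟨φ (z, t), ?_⟩) ⟨?_, ?_⟩)
    · rw [col_some]; exact ⟨_, h1 _, hγ _⟩
    · intro t t' ht
      simp only [Subtype.mk.injEq] at ht
      have := hφ ht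
      simpa using this
    · rintro ⟨i, hi⟩
      obtain ⟨a, ha, hz⟩ := (col_some h f' _ _ _).1 hi
      obtain ⟨p, rfl, rfl⟩ := (h4 _ _).1 ha
      rw [hγ] at hz
      subst hz
      exact ⟨p.2, rfl⟩
  have hcs : ∀ i l z, col h f' i = some (some l, z) ↔
      (col h f i = some (l, z) ∧ ¬ ∃ p, φ p = i) := by
    intro i l z
    rw [col_some, col_some]
    simp only [h3]
    tauto
  refine ⟨f', ?_, ?_, fun p => ⟨_, h1 p⟩, ?_⟩
  · rintro (_ | l)
    · exact ⟨1, fun z => by rw [hcn, hq, one_mul]⟩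
    · obtain ⟨m, hm⟩ := hE l
      by_cases hl : ∀ p, f (φ p) = some (l, γ p)
      · refine ⟨m - 1, fun z => ?_⟩
        have hs := card_split (fun i => col h f i = some (l, z)) (fun i => ∃ p, φ p = i)
        simp only [← hcs] at hs
        have e1 : Nat.card {i // col h f i = some (l, z) ∧ ∃ p, φ p = i} = q := by
          refine Eq.trans ?_ (hcn z)
          refine Nat.card_congr (Equiv.subtypeEquivRight fun i => ?_)
          rw [col_some, col_some]
          simp only [h4]
          constructor
          · rintro ⟨⟨a, ha, hz⟩, p, rfl⟩
            rw [hl] at ha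
            simp only [Option.some.injEq, Prod.mk.injEq, true_and] at ha
            exact ⟨a, ⟨p, rfl, ha⟩, hz⟩
          · rintro ⟨a, ⟨p, rfl, rfl⟩, hz⟩
            exact ⟨⟨_, hl p, hz⟩, p, rfl⟩
        rw [e1, hm, ← hq] at hs
        rw [← hq, Nat.sub_mul, ← hs]
        omega
      · refine ⟨m, fun z => ?_⟩
        rw [← hm z]
        refine Nat.card_congr (Equiv.subtypeEquivRight fun i => ?_)
        rw [hcs]
        refine ⟨fun hh => hh.1, fun hh => ⟨hh, ?_⟩⟩
        rintro ⟨p, rfl⟩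
        obtain ⟨a, ha, -⟩ := (col_some h f _ _ _).1 hh
        rcases hc with hc | ⟨l0, hc⟩
        · rw [hc] at ha; cases ha
        · have := hc p
          rw [ha] at this
          simp only [Option.some.injEq, Prod.mk.injEq] at this
          obtain ⟨rfl, -⟩ := this
          exact hl hc
  · constructor
    · intro i hi
      change f' i = none at hi
      change f i = none
      by_cases hp : ∃ p, φ p = i
      · obtain ⟨p, rfl⟩ := hp
        rw [h1] at hi; cases hi
      · rw [h2 i hp] at hi
        simpa using hi
    · rintro i j ⟨l, a, b, hi, hj⟩
      rcases l with _ | l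
      · have hi' := hi
        have hj' := hj
        obtain ⟨p, rfl, rfl⟩ := (h4 _ _).1 hi
        obtain ⟨p', rfl, rfl⟩ := (h4 _ _).1 hj
        rcases hc with hc | ⟨l0, hc⟩
        · exact Or.inl ⟨hc _, hc _⟩
        · refine Or.inr ⟨⟨l0, _, _, hc _, hc _⟩, ?_⟩
          change labOf (f _) (f _) = labOf (f' _) (f' _)
          rw [hc, hc, hi', hj', labOf_some, labOf_some]
      · have hi' := ((h3 _ _ _).1 hi).1
        have hj' := ((h3 _ _ _).1 hj).1
        refine Or.inr ⟨⟨l, _, _, hi', hj'⟩, ?_⟩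
        change labOf (f _) (f _) = labOf (f' _) (f' _)
        rw [hi, hj, hi', hj', labOf_some, labOf_some]
  · intro i hi a ha
    obtain ⟨p, hp, -⟩ := (h4 _ _).1 ha
    exact hi p hp

/-- minimality -/
def IsMinl {N r : ℕ} (d k : ℕ) (x : DowlingElt N r) : Prop :=
  DDiv d x ∧ EvenCol k x ∧
    ∀ y : DowlingElt N r, DDiv d y → EvenCol k y → y ≤ x → x ≤ y

/-- good functions -/
def IsB {N r k n : ℕ} (d e : ℕ) (h : k ∣ r) (f : Fin N → Option (Fin n × RU r)) : Prop :=
  Nat.card {i // f i = none} = e ∧ ∀ l z, Nat.card {i // col h f i = some (l, z)} = d / k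

lemma minl_zero {N k r d : ℕ} {L : Type*} (h : k ∣ r) (hd : 0 < d) (hk : 0 < k) (hr : 0 < r)
    (hkd : k ∣ d)
    (f : Fin N → Option (L × RU r)) (hmin : IsMinl d k (ofFun f)) :
    Nat.card {i // f i = none} < d := by
  have := finite_RU hk
  by_contra! hlt
  have hE := (ev_iff h hk hkd f).1 ⟨hmin.1, hmin.2.1⟩
  have hcard : Nat.card (RU k × Fin (d / k)) = d := by
    rw [Nat.card_prod, card_RU hk, Nat.card_fin, Nat.mul_div_cancel' hkd]
  obtain ⟨ψ⟩ : Nonempty ((RU k × Fin (d / k)) ↪ {i // f i = none}) := by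
    rw [← hcard] at hlt
    have := Fintype.ofFinite (RU k × Fin (d / k))
    have := Fintype.ofFinite {i // f i = none}
    rw [Nat.card_eq_fintype_card, Nat.card_eq_fintype_card] at hlt
    exact Function.Embedding.nonempty_of_card_le hlt
  choose γ hγ using fun p : RU k × Fin (d / k) => colH_surj k r hk hr h p.1
  obtain ⟨f', h1, h2, h3, -⟩ := refine_split h rfl f hE (fun p => (ψ p).1)
    (fun a b hab => ψ.injective (Subtype.ext hab)) γ hγ (Or.inl fun p => (ψ p).2)
  obtain ⟨h5, h6⟩ := (ev_iff h hk hkd f').2 h1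
  have hle := hmin.2.2 _ h5 h6 h2
  have p0 : RU k × Fin (d / k) := ⟨1, ⟨0, Nat.div_pos (Nat.le_of_dvd hd hkd) hk⟩⟩
  have hz : f' (ψ p0).1 = none := hle.1 (ψ p0).2
  obtain ⟨a, ha⟩ := h3 p0
  rw [hz] at ha
  cases ha

lemma min_block {N k r d : ℕ} {L : Type*} (h : k ∣ r) (hd : 0 < d) (hk : 0 < k)
    (hkd : k ∣ d)
    (f : Fin N → Option (L × RU r)) (hmin : IsMinl d k (ofFun f)) (l : L) (m : ℕ)
    (hm : ∀ z, Nat.card {i // col h f i = some (l, z)} = m * (d / k)) : m ≤ 1 := by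
  have := finite_RU hk
  by_contra! hlt
  have hE := (ev_iff h hk hkd f).1 ⟨hmin.1, hmin.2.1⟩
  have hq : 0 < d / k := Nat.div_pos (Nat.le_of_dvd hd hkd) hk
  have hψ : ∀ z, Nonempty (Fin (d / k + 1) ↪ {i // col h f i = some (l, z)}) := by
    intro z
    have := Fintype.ofFinite {i // col h f i = some (l, z)}
    refine Function.Embedding.nonempty_of_card_le ?_
    rw [← Nat.card_eq_fintype_card, ← Nat.card_eq_fintype_card, hm, Nat.card_fin]
    nlinarith
  let ψ := fun z => (hψ z).some
  have hγ' : ∀ p : RU k × Fin (d / k), ∃ a, f (ψ p.1 p.2.castSucc).1 = some (l, a) ∧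
      colH k r h a = p.1 := fun p => (col_some h f _ _ _).1 (ψ p.1 p.2.castSucc).2
  choose γ hγ1 hγ2 using hγ'
  have key : ∀ z z' s t, (ψ z s).1 = (ψ z' t).1 → z = z' ∧ s = t := by
    intro z z' s t hst
    have e1 := (ψ z s).2
    rw [hst, (ψ z' t).2] at e1
    simp only [Option.some.injEq, Prod.mk.injEq, true_and] at e1
    subst e1
    exact ⟨rfl, (ψ z').injective (Subtype.ext hst)⟩
  obtain ⟨f', h1, h2, h3, h4⟩ := refine_split h rfl f hE (fun p => (ψ p.1 p.2.castSucc).1)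
    (by
      rintro ⟨z, s⟩ ⟨z', t⟩ hab
      obtain ⟨e1, e2⟩ := key _ _ _ _ hab
      simp only at e1 e2
      rw [e1, Fin.castSucc_injective _ e2]) γ hγ2 (Or.inr ⟨l, hγ1⟩)
  obtain ⟨h5, h6⟩ := (ev_iff h hk hkd f').2 h1
  have hle := hmin.2.2 _ h5 h6 h2
  obtain ⟨a, ha, -⟩ := (col_some h f _ _ _).1 (ψ 1 (Fin.last _)).2
  have hp := hγ1 (1, ⟨0, hq⟩)
  obtain ⟨b, hb⟩ := h3 (1, ⟨0, hq⟩)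
  simp only at hp hb
  rcases hle.2 _ _ ⟨l, _, _, hp, ha⟩ with ⟨hz, -⟩ | ⟨⟨l', a', b', e1, e2⟩, -⟩
  · change f' _ = none at hz
    rw [hb] at hz; cases hz
  · rw [hb] at e1
    simp only [Option.some.injEq, Prod.mk.injEq] at e1
    obtain ⟨rfl, rfl⟩ := e1
    refine h4 _ ?_ _ e2
    intro p hpp
    exact absurd (key _ _ _ _ hpp).2 (Fin.castSucc_lt_last _).ne

lemma isB_ev {N r k n d e : ℕ} (h : k ∣ r) (f : Fin N → Option (Fin n × RU r))
    (hB : IsB d e h f) : Ev d h f :=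
  fun l => ⟨1, fun z => by rw [hB.2 l z, one_mul]⟩

lemma isB_min {r k n d e : ℕ} (h : k ∣ r) (hd : 0 < d) (hk : 0 < k) (hr : 0 < r)
    (hkd : k ∣ d) (he : e < d) (f : Fin (d * n + e) → Option (Fin n × RU r))
    (hB : IsB d e h f) : IsMinl d k (ofFun f) := by
  have := finite_RU hk
  have := Fintype.ofFinite (RU k)
  obtain ⟨a1, a2⟩ := (ev_iff h hk hkd f).2 (isB_ev h f hB)
  refine ⟨a1, a2, ?_⟩
  intro y hy1 hy2 hle
  have hzero : (ofFun f).zero = y.zero := by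
    symm
    apply Set.eq_of_subset_of_ncard_le hle.1 ?_ (Set.toFinite _)
    have e1 : (ofFun f).zero.ncard = e := by
      exact hB.1
    obtain ⟨L, _, g, -, rfl⟩ := exists_ofFun hr y
    choose m hm using (ev_iff h hk hkd g).1 ⟨hy1, hy2⟩
    have ht := total_card h g
    rw [Finset.sum_congr rfl (fun l _ => ev_block h hk hkd g l (m l) (hm l)),
      ← Finset.mul_sum] at ht
    have e2 : (ofFun g).zero.ncard = Nat.card {i // g i = none} := rfl
    rw [e1, e2]
    have hmod := congrArg (· % d) ht
    simp only [Nat.add_mul_mod_self_left, Nat.mul_add_mod, Nat.mod_eq_of_lt he] at hmod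
    exact hmod.symm.le.trans (Nat.mod_le _ _)
  refine ⟨hzero.le, ?_⟩
  intro i j hij
  right
  have hi := ((ofFun f).rel_compl i j hij).1
  have hiy : i ∉ y.zero := hzero ▸ hi
  have hsub : {t | y.rel i t} ⊆ {t | (ofFun f).rel i t} := by
    intro t ht
    rcases hle.2 i t ht with hh | hh
    · exact absurd hh.1 hi
    · exact hh.1
  have hcx : Nat.card {t // (ofFun f).rel i t} = d := by
    obtain ⟨l, a, b, hfi, -⟩ := hij
    rw [block_card h f hfi, ev_block h hk hkd f l 1 (fun z => by rw [hB.2, one_mul]), mul_one]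
  have hcy : d ≤ Nat.card {t // y.rel i t} := by
    refine Nat.le_of_dvd ?_ (hy1 i hiy)
    have : Nonempty {t // y.rel i t} := ⟨⟨i, y.rel_refl i hiy⟩⟩
    exact Nat.card_pos
  have heq : {t | y.rel i t} = {t | (ofFun f).rel i t} := by
    apply Set.eq_of_subset_of_ncard_le hsub ?_ (Set.toFinite _)
    exact hcx.le.trans hcy
  have hyij : y.rel i j := by
    have : j ∈ {t | y.rel i t} := heq ▸ hij
    exact this
  refine ⟨hyij, ?_⟩
  rcases hle.2 i j hyij with hh | hh
  · exact absurd hh.1 hi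
  · exact hh.2.symm

lemma min_isB {r k n d e : ℕ} (h : k ∣ r) (hd : 0 < d) (hk : 0 < k) (hr : 0 < r)
    (hkd : k ∣ d) (he : e < d) (x : DowlingElt (d * n + e) r) (hx : IsMinl d k x) :
    ∃ f : Fin (d * n + e) → Option (Fin n × RU r), IsB d e h f ∧ ofFun f = x := by
  have := finite_RU hk
  have := Fintype.ofFinite (RU k)
  obtain ⟨L, _, g, hsurj, rfl⟩ := exists_ofFun hr x
  have hEv := (ev_iff h hk hkd g).1 ⟨hx.1, hx.2.1⟩
  have hone : ∀ l z, Nat.card {i // col h g i = some (l, z)} = 1 * (d / k) := by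
    intro l
    obtain ⟨m, hm⟩ := hEv l
    have h1 := min_block h hd hk hkd g hx l m hm
    have h0 : m ≠ 0 := by
      rintro rfl
      obtain ⟨i, a, hi⟩ := hsurj l
      have := hm (colH k r h a)
      rw [zero_mul] at this
      have hne : Nonempty {i // col h g i = some (l, colH k r h a)} :=
        ⟨⟨i, (col_some h g _ _ _).2 ⟨a, hi, rfl⟩⟩⟩
      exact Nat.card_pos.ne' this
    have : m = 1 := by omega
    subst this
    exact hm
  have hz := minl_zero h hd hk hr hkd g hx
  have ht := total_card h g
  rw [Finset.sum_congr rfl (fun l _ => ev_block h hk hkd g l 1 (hone l))] at ht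
  simp only [mul_one, Finset.sum_const, smul_eq_mul, Finset.card_univ] at ht
  have hz2 : Nat.card {i // g i = none} = e := by
    have hmod := congrArg (· % d) ht
    simpa only [Nat.add_mul_mod_self_right, Nat.mul_add_mod, Nat.mod_eq_of_lt he,
      Nat.mod_eq_of_lt hz] using hmod
  have hL : Fintype.card L = n := by
    rw [hz2] at ht
    have : d * Fintype.card L = d * n := by linarith
    exact Nat.eq_of_mul_eq_mul_left hd this
  let E : L ≃ Fin n := Fintype.equivFinOfCardEq hL
  let f : Fin (d * n + e) → Option (Fin n × RU r) := fun i => (g i).map (Prod.map E id)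
  have hf : ∀ i l a, f i = some (l, a) ↔ g i = some (E.symm l, a) := by
    intro i l a
    simp only [f]
    rcases g i with _ | ⟨l', a'⟩
    · simp
    · simp [Equiv.eq_symm_apply]
  have hf0 : ∀ i, f i = none ↔ g i = none := by
    intro i; simp [f]
  refine ⟨f, ⟨?_, ?_⟩, ?_⟩
  · simpa only [hf0] using hz2
  · intro l z
    have := hone (E.symm l) z
    rw [one_mul] at this
    rw [← this]
    simp only [col_some, hf]
  · refine DowlingElt_ext' ?_ ?_ ?_
    · ext i; exact hf0 i
    · intro i j
      constructor
      · rintro ⟨l, a, b, h1, h2⟩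
        exact ⟨_, _, _, (hf _ _ _).1 h1, (hf _ _ _).1 h2⟩
      · rintro ⟨l, a, b, h1, h2⟩
        exact ⟨E l, a, b, (hf _ _ _).2 (by simpa using h1), (hf _ _ _).2 (by simpa using h2)⟩
    · rintro i j ⟨l, a, b, h1, h2⟩
      change labOf (f i) (f j) = labOf (g i) (g j)
      rw [h1, h2, (hf _ _ _).1 h1, (hf _ _ _).1 h2, labOf_some, labOf_some]

/-- twist by relabelling -/
noncomputable def tw {N n r : ℕ} (f : Fin N → Option (Fin n × RU r))
    (p : Equiv.Perm (Fin n) × (Fin n → RU r)) : Fin N → Option (Fin n × RU r) :=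
  fun i => (f i).map (fun q => (p.1 q.1, p.2 q.1 * q.2))

lemma tw_none {N n r : ℕ} (f : Fin N → Option (Fin n × RU r))
    (p : Equiv.Perm (Fin n) × (Fin n → RU r)) (i) : tw f p i = none ↔ f i = none := by
  simp [tw]

lemma tw_some {N n r : ℕ} (f : Fin N → Option (Fin n × RU r))
    (p : Equiv.Perm (Fin n) × (Fin n → RU r)) (i l a) :
    tw f p i = some (l, a) ↔ f i = some (p.1.symm l, (p.2 (p.1.symm l))⁻¹ * a) := by
  simp only [tw]
  rcases f i with _ | ⟨l', a'⟩
  · simp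
  · simp only [Option.map_some, Option.some.injEq, Prod.mk.injEq]
    constructor
    · rintro ⟨rfl, rfl⟩; simp
    · rintro ⟨rfl, rfl⟩; simp

lemma tw_isB {N n r k d e : ℕ} (h : k ∣ r) (f : Fin N → Option (Fin n × RU r))
    (p : Equiv.Perm (Fin n) × (Fin n → RU r)) (hB : IsB d e h f) : IsB d e h (tw f p) := by
  refine ⟨by simpa only [tw_none] using hB.1, fun l z => ?_⟩
  rw [← hB.2 (p.1.symm l) ((colH k r h (p.2 (p.1.symm l)))⁻¹ * z)]
  refine Nat.card_congr (Equiv.subtypeEquivRight fun i => ?_)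
  rw [col_some, col_some]
  simp only [tw_some]
  constructor
  · rintro ⟨a, h1, rfl⟩
    exact ⟨_, h1, by simp⟩
  · rintro ⟨a, h1, h2⟩
    refine ⟨p.2 (p.1.symm l) * a, by simpa using h1, ?_⟩
    rw [map_mul, h2]; simp

lemma tw_ofFun {N n r : ℕ} (f : Fin N → Option (Fin n × RU r))
    (p : Equiv.Perm (Fin n) × (Fin n → RU r)) : ofFun (tw f p) = ofFun f := by
  have hrel : ∀ l i a, f i = some (l, a) → tw f p i = some (p.1 l, p.2 l * a) := by
    intro l i a hi
    simp [tw, hi]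
  refine DowlingElt_ext' ?_ ?_ ?_
  · ext i; exact tw_none f p i
  · intro i j
    constructor
    · rintro ⟨l, a, b, h1, h2⟩
      exact ⟨_, _, _, (tw_some _ _ _ _ _).1 h1, (tw_some _ _ _ _ _).1 h2⟩
    · rintro ⟨l, a, b, h1, h2⟩
      exact ⟨_, _, _, hrel _ _ _ h1, hrel _ _ _ h2⟩
  · rintro i j ⟨l, a, b, h1, h2⟩
    change labOf (tw f p i) (tw f p j) = labOf (f i) (f j)
    rw [h1, h2, (tw_some _ _ _ _ _).1 h1, (tw_some _ _ _ _ _).1 h2, labOf_some, labOf_some]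
    congr 2
    simp [mul_comm, mul_left_comm]

lemma fiber_card {N n r k d e : ℕ} (h : k ∣ r) (hd : 0 < d) (hk : 0 < k) (hr : 0 < r)
    (hkd : k ∣ d) (f : Fin N → Option (Fin n × RU r)) (hB : IsB d e h f) :
    Nat.card {g : {g : Fin N → Option (Fin n × RU r) // IsB d e h g} // ofFun g.1 = ofFun f} =
      n.factorial * r ^ n := by
  have hq : 0 < d / k := Nat.div_pos (Nat.le_of_dvd hd hkd) hk
  have hsurj : ∀ l, ∃ i a, f i = some (l, a) := by
    intro l
    have h1 := hB.2 l 1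
    rw [← h1] at hq
    obtain ⟨⟨i, hi⟩⟩ := (Nat.card_pos_iff.1 hq).1
    obtain ⟨a, ha, -⟩ := (col_some h f _ _ _).1 hi
    exact ⟨i, a, ha⟩
  have hcard : Nat.card (Equiv.Perm (Fin n) × (Fin n → RU r)) = n.factorial * r ^ n := by
    rw [Nat.card_prod, Nat.card_perm, Nat.card_fin, Nat.card_fun, card_RU hr, Nat.card_fin]
  rw [← hcard]
  symm
  choose I A hI using hsurj
  refine Nat.card_congr (Equiv.ofBijective
    (fun p => ⟨⟨tw f p, tw_isB h f p hB⟩, tw_ofFun f p⟩) ⟨?_, ?_⟩)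
  · rintro ⟨π, u⟩ ⟨π', u'⟩ hh
    simp only [Subtype.mk.injEq] at hh
    have : ∀ l, π l = π' l ∧ u l = u' l := by
      intro l
      have := congrFun hh (I l)
      simpa [tw, hI] using this
    ext1
    · ext1 l; exact (this l).1
    · funext l; exact (this l).2
  · rintro ⟨⟨g, hgB⟩, hg⟩
    simp only at hg
    have hz : ∀ i, g i = none ↔ f i = none := by
      intro i
      have := congrArg (fun x => i ∈ x.zero) hg
      exact iff_of_eq this
    have hrel : ∀ i j, (ofFun g).rel i j ↔ (ofFun f).rel i j := by
      intro i j; rw [hg]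
    have hlab : ∀ i j, labOf (g i) (g j) = labOf (f i) (f j) := by
      intro i j
      exact congrArg (fun x => x.lab i j) hg
    have hgI : ∀ l, ∃ l' b, g (I l) = some (l', b) := by
      intro l
      rcases hh : g (I l) with _ | ⟨l', b⟩
      · have := (hz _).1 hh
        rw [hI] at this; cases this
      · exact ⟨l', b, rfl⟩
    choose π b hπ using hgI
    have hinj : Function.Injective π := by
      intro l l' hll
      have h1 : (ofFun g).rel (I l) (I l') := ⟨π l, b l, b l', hπ l, by rw [hll]; exact hπ l'⟩
      obtain ⟨m, a1, a2, e1, e2⟩ := (hrel _ _).1 h1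
      rw [hI] at e1 e2
      simp only [Option.some.injEq, Prod.mk.injEq] at e1 e2
      rw [e1.1, e2.1]
    refine ⟨⟨Equiv.ofBijective π (Finite.injective_iff_bijective.1 hinj),
      fun l => b l * (A l)⁻¹⟩, ?_⟩
    apply Subtype.ext
    apply Subtype.ext
    funext i
    simp only [tw]
    rcases hfi : f i with _ | ⟨l, a⟩
    · simp [(hz i).2 hfi]
    · have h1 : (ofFun g).rel (I l) i := (hrel _ _).2 ⟨l, _, _, hI l, hfi⟩
      obtain ⟨m, a1, a2, e1, e2⟩ := h1
      rw [hπ] at e1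
      simp only [Option.some.injEq, Prod.mk.injEq] at e1
      obtain ⟨rfl, rfl⟩ := e1
      have h2 := hlab (I l) i
      rw [hπ, e2, hI, hfi, labOf_some, labOf_some] at h2
      have h3 := RU_ext h2
      rw [e2]
      simp only [Option.map_some, Equiv.ofBijective_apply, Option.some.injEq, Prod.mk.injEq,
        true_and]
      rw [mul_assoc, ← h3]
      simp

lemma isB_card {r k n d e : ℕ} (h : k ∣ r) (hk : 0 < k) (hr : 0 < r) (hkd : k ∣ d) :
    Nat.card {g : Fin (d * n + e) → Option (Fin n × RU r) // IsB d e h g} *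
      (e.factorial * ((d / k).factorial) ^ (k * n)) =
      (d * n + e).factorial * (r / k) ^ (d * n) := by
  classical
  have := finite_RU hk
  have := Fintype.ofFinite (RU k)
  have := finite_RU hr
  have hK : Fintype.card (RU k) = k := by rw [← Nat.card_eq_fintype_card, card_RU hk]
  let w : Option (Fin n × RU k) → ℕ := fun p => p.elim e (fun _ => d / k)
  let W : Option (Fin n × RU k) → ℕ := fun p => p.elim 1 (fun _ => r / k)
  have hdk := Nat.mul_div_cancel' hkd
  have hc := card_fun_fiber (α := Fin (d * n + e)) w (by
    rw [Fintype.sum_option]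
    simp only [w, Option.elim, Finset.sum_const, Finset.card_univ, Fintype.card_prod, hK,
      Fintype.card_fin, smul_eq_mul, Nat.card_fin]
    rw [mul_assoc, hdk]; ring)
  have hw : ∏ p, (w p).factorial = e.factorial * ((d / k).factorial) ^ (k * n) := by
    rw [Fintype.prod_option]
    simp only [w, Option.elim, Finset.prod_const, Finset.card_univ, Fintype.card_prod, hK,
      Fintype.card_fin]
    rw [mul_comm n k]
  rw [hw, Nat.card_fin] at hc
  let G := {g : Fin (d * n + e) → Option (Fin n × RU k) // ∀ p, Nat.card {a // g a = p} = w p}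
  let B := {g : Fin (d * n + e) → Option (Fin n × RU r) // IsB d e h g}
  have hBw : ∀ f : Fin (d * n + e) → Option (Fin n × RU r), IsB d e h f ↔
      ∀ p, Nat.card {a // col h f a = p} = w p := by
    intro f
    constructor
    · rintro ⟨h1, h2⟩ (_ | ⟨l, z⟩)
      · simp only [col_none]; exact h1
      · exact h2 l z
    · intro hh
      refine ⟨?_, fun l z => hh (some (l, z))⟩
      have h0 := hh none
      simp only [col_none] at h0
      exact h0
  let Φ : B → G := fun f => ⟨col h f.1, (hBw f.1).1 f.2⟩
  have : Finite G := by infer_instance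
  have := Fintype.ofFinite G
  have hW : ∀ p : Option (Fin n × RU k),
      Nat.card {q : Option (Fin n × RU r) // q.map (Prod.map id (colH k r h)) = p} = W p := by
    rintro (_ | ⟨l, z⟩)
    · have : Unique {q : Option (Fin n × RU r) //
          q.map (Prod.map id (colH k r h)) = none} :=
        ⟨⟨⟨none, rfl⟩⟩, fun q => Subtype.ext (by simpa using q.2)⟩
      exact Nat.card_unique
    · change _ = r / k
      rw [← card_colH_fiber k r hk hr h z]
      symm
      refine Nat.card_congr (Equiv.ofBijective (fun a => ⟨some (l, a.1), ?_⟩) ⟨?_, ?_⟩)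
      · simp [a.2]
      · intro a b hab
        apply Subtype.ext
        simpa using hab
      · rintro ⟨_ | ⟨l', a⟩, hq⟩
        · simp at hq
        · simp only [Option.map_some, Prod.map_apply, id, Option.some.injEq, Prod.mk.injEq] at hq
          obtain ⟨rfl, hq2⟩ := hq
          exact ⟨⟨a, hq2⟩, rfl⟩
  have hfib : ∀ g : G, Nat.card {f // Φ f = g} = (r / k) ^ (d * n) := by
    intro g
    have e1 : Nat.card {f // Φ f = g} = Nat.card (∀ i,
        {q : Option (Fin n × RU r) // q.map (Prod.map id (colH k r h)) = g.1 i}) := by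
      symm
      refine Nat.card_congr (Equiv.ofBijective
        (fun F => ⟨⟨fun i => (F i).1, ?_⟩, ?_⟩) ⟨?_, ?_⟩)
      · rw [hBw]
        have : col h (fun i => (F i).1) = g.1 := funext fun i => (F i).2
        rw [this]
        exact g.2
      · exact Subtype.ext (funext fun i => (F i).2)
      · intro F F' hF
        funext i
        apply Subtype.ext
        exact congrFun (congrArg (fun t => t.1.1) hF) i
      · rintro ⟨f, hf⟩
        exact ⟨fun i => ⟨f.1 i, congrFun (congrArg Subtype.val hf) i⟩, rfl⟩
    rw [e1, Nat.card_pi]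
    simp only [hW]
    rw [← Fintype.prod_fiberwise' g.1 W]
    simp only [Finset.prod_const, Finset.card_univ]
    simp only [← Nat.card_eq_fintype_card, g.2]
    rw [Fintype.prod_option]
    simp only [w, W, Option.elim, Finset.prod_const, Finset.card_univ, Fintype.card_prod, hK,
      Fintype.card_fin, one_pow, one_mul, ← pow_mul]
    congr 1
    rw [mul_left_comm, mul_comm n, mul_comm _ k, hdk]
  have hs := sum_card_fiber Φ
  rw [Finset.sum_congr rfl (fun g _ => hfib g), Finset.sum_const, smul_eq_mul, Finset.card_univ,
    ← Nat.card_eq_fintype_card] at hs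
  change Nat.card B * _ = _
  rw [← hs, ← hc]
  ring

/-- The number of minimal elements of the poset
`S_n^{(d,e,k)} = Q_{dn+e}(r, d, k) ∖ {0̂}` (the `k`-evenly coloured `d`-divisible Dowling
lattice over `μ_r` on `dn + e` points, with the adjoined minimum removed) is
`N(n) = (dn+e)! r^{(d-1)n} / (n! e! ((d/k)!)^{kn} k^{dn})`. -/
theorem card_minimal_QnRDK (d n e k r : ℕ) (hd : 0 < d) (hk : 0 < k) (hr : 0 < r)
    (hkd : k ∣ d) (hkr : k ∣ r) (he : e < d) :
    Nat.card {x : DowlingElt (d * n + e) r //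
        DDiv d x ∧ EvenCol k x ∧
        ∀ y : DowlingElt (d * n + e) r, DDiv d y → EvenCol k y → y ≤ x → x ≤ y} =
      (d * n + e).factorial * r ^ ((d - 1) * n) /
        (n.factorial * e.factorial * ((d / k).factorial) ^ (k * n) * k ^ (d * n)) := by

  classical
  have hfinr := finite_RU hr
  let X := {x : DowlingElt (d * n + e) r // IsMinl d k x}
  let B := {g : Fin (d * n + e) → Option (Fin n × RU r) // IsB d e hkr g}
  let Φ : B → X := fun f => ⟨ofFun f.1, isB_min hkr hd hk hr hkd he f.1 f.2⟩
  have hsurj : Function.Surjective Φ := by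
    rintro ⟨x, hx⟩
    obtain ⟨f, hf, rfl⟩ := min_isB hkr hd hk hr hkd he x hx
    exact ⟨⟨f, hf⟩, rfl⟩
  have : Finite B := by infer_instance
  have : Finite X := Finite.of_surjective Φ hsurj
  have := Fintype.ofFinite X
  have hfib : ∀ x : X, Nat.card {f // Φ f = x} = n.factorial * r ^ n := by
    intro x
    obtain ⟨f, rfl⟩ := hsurj x
    rw [← fiber_card hkr hd hk hr hkd f.1 f.2]
    exact Nat.card_congr (Equiv.subtypeEquivRight fun g => Subtype.ext_iff)
  have hs := sum_card_fiber Φ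
  rw [Finset.sum_congr rfl (fun g _ => hfib g), Finset.sum_const, smul_eq_mul, Finset.card_univ,
    ← Nat.card_eq_fintype_card] at hs
  have hB : Nat.card B * (e.factorial * ((d / k).factorial) ^ (k * n)) =
    (d * n + e).factorial * (r / k) ^ (d * n) := isB_card hkr hk hr hkd
  change Nat.card X = _
  rw [← hs] at hB
  symm
  apply Nat.div_eq_of_eq_mul_left
  · have := Nat.factorial_pos n
    have := Nat.factorial_pos e
    have := Nat.factorial_pos (d / k)
    positivity
  apply Nat.eq_of_mul_eq_mul_right (pow_pos hr n)
  have e1 : r ^ ((d - 1) * n) * r ^ n = (r / k) ^ (d * n) * k ^ (d * n) := by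
    rw [← mul_pow, Nat.div_mul_cancel hkr, ← pow_add]
    congr 1
    obtain ⟨d', rfl⟩ : ∃ d', d = d' + 1 := ⟨d - 1, by omega⟩
    simp; ring
  rw [mul_assoc, e1, ← mul_assoc, ← hB]
  ring
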